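/- Let q > 1. Then there exists a radially symmetric solution u to Δ²u + u^{−q} = 0 in ℝ³ with u > 0 such that lim_{|x|→∞} u(x)/|x|² exists and lies in (0, ∞); that is, u has exact quadratic growth at infinity. -/

import Mathlib

open MeasureTheory Filter Topology Real

/-- The Laplacian of a function on ℝ³. -/
noncomputable def laplacian (u : EuclideanSpace ℝ (Fin 3) → ℝ) (x : EuclideanSpace ℝ (Fin 3)) : ℝ :=
  ∑ i : Fin 3, iteratedFDeriv ℝ 2 u x ![EuclideanSpace.single i 1, EuclideanSpace.single i 1]

theorem param_hasFDerivAt {E F : Type} [NormedAddCommGroup E] [NormedSpace ℝ E] [ProperSpace E]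
    [NormedAddCommGroup F] [NormedSpace ℝ F]
    (K : E → ℝ → F) (K' : E → ℝ → (E →L[ℝ] F))
    (hK : Continuous (Function.uncurry K)) (hK' : Continuous (Function.uncurry K'))
    (h : ∀ x t, HasFDerivAt (fun x => K x t) (K' x t) x) (x : E) :
    HasFDerivAt (fun x => ∫ t in (0:ℝ)..1, K x t) (∫ t in (0:ℝ)..1, K' x t) x := by
  have hc : IsCompact (Metric.closedBall x 1 ×ˢ Set.Icc (0:ℝ) 1) :=
    (isCompact_closedBall x 1).prod isCompact_Icc
  obtain ⟨C, hC⟩ := hc.exists_bound_of_continuousOn hK'.continuousOn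
  have hKc : ∀ x, Continuous (K x) := fun x => hK.comp (Continuous.prodMk_right x)
  have hKc' : ∀ x, Continuous (K' x) := fun x => hK'.comp (Continuous.prodMk_right x)
  refine intervalIntegral.hasFDerivAt_integral_of_dominated_of_fderiv_le
    (bound := fun _ => C) (s := Metric.closedBall x 1) (Metric.closedBall_mem_nhds x one_pos) ?_ ?_ ?_ ?_ ?_ ?_
  · exact Eventually.of_forall fun y => (hKc y).aestronglyMeasurable
  · exact (hKc x).intervalIntegrable _ _
  · exact (hKc' x).aestronglyMeasurable
  · refine Eventually.of_forall fun t ht y hy => hC (y, t) ⟨hy, ?_⟩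
    rw [Set.uIoc_of_le zero_le_one] at ht
    exact ⟨ht.1.le, ht.2⟩
  · exact intervalIntegrable_const
  · exact Eventually.of_forall fun t _ y _ => h y t

theorem param_contDiff {E : Type} [NormedAddCommGroup E] [NormedSpace ℝ E] [ProperSpace E] (n : ℕ) :
    ∀ {F : Type} [NormedAddCommGroup F] [NormedSpace ℝ F] (k : ℕ) (f : E → F) (_ : ContDiff ℝ n f),
    ContDiff ℝ n (fun x => ∫ t in (0:ℝ)..1, t ^ k • f (t • x)) := by
  induction n with
  | zero =>
    intro F _ _ k f hf
    simp only [Nat.cast_zero, contDiff_zero] at hf ⊢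
    exact intervalIntegral.continuous_parametric_intervalIntegral_of_continuous' (by fun_prop) _ _
  | succ n ih =>
    intro F _ _ k f hf
    have hf1 := hf
    push_cast at hf ⊢
    rw [contDiff_succ_iff_hasFDerivAt] at hf
    obtain ⟨f', hf'c, hf'⟩ := hf
    rw [contDiff_succ_iff_hasFDerivAt]
    have c1 := hf1.continuous
    have c2 := hf'c.continuous
    refine ⟨_, ih (k+1) f' hf'c, fun x => ?_⟩
    refine param_hasFDerivAt (fun x t => t ^ k • f (t • x)) (fun x t => t ^ (k+1) • f' (t • x))
      ?_ ?_ ?_ x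
    · simp only [Function.uncurry_def]; fun_prop
    · simp only [Function.uncurry_def]; fun_prop
    · intro x t
      have h1 : HasFDerivAt (fun x : E => t • x) (t • ContinuousLinearMap.id ℝ E) x :=
        (hasFDerivAt_id x).const_smul t
      have := ((hf' (t • x)).comp x h1).const_smul (t ^ k)
      have e : t ^ (k+1) • f' (t • x)
          = t ^ k • (f' (t • x)).comp (t • ContinuousLinearMap.id ℝ E) := by
        apply ContinuousLinearMap.ext
        intro y
        simp [pow_succ, mul_smul]
      rw [e]
      exact this

/-- primitive -/
noncomputable def Prim (φ : ℝ → ℝ) (y : ℝ) : ℝ := ∫ σ in (0:ℝ)..y, φ σ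

/-- inverse radial Laplacian in the variable s = r^2 -/
noncomputable def AA (φ : ℝ → ℝ) (s : ℝ) : ℝ := 2⁻¹ * ∫ t in (0:ℝ)..1, Prim φ (t ^ 2 * s)

theorem Prim_hasDerivAt {φ : ℝ → ℝ} (h : Continuous φ) (y : ℝ) : HasDerivAt (Prim φ) (φ y) y :=
  intervalIntegral.integral_hasDerivAt_right (h.intervalIntegrable _ _)
    h.aestronglyMeasurable.stronglyMeasurableAtFilter h.continuousAt

theorem Prim_cont {φ : ℝ → ℝ} (h : Continuous φ) : Continuous (Prim φ) :=
  continuous_iff_continuousAt.2 fun y => (Prim_hasDerivAt h y).continuousAt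

theorem AA_hasDerivAt {φ : ℝ → ℝ} (h : Continuous φ) (s : ℝ) :
    HasDerivAt (AA φ) (2⁻¹ * ∫ t in (0:ℝ)..1, t ^ 2 * φ (t ^ 2 * s)) s := by
  have hp := Prim_cont h
  have := param_hasFDerivAt (fun s t => Prim φ (t ^ 2 * s))
    (fun s t => ContinuousLinearMap.toSpanSingleton ℝ (t ^ 2 * φ (t ^ 2 * s))) ?_ ?_ ?_ s
  · have h2 := this.hasDerivAt
    have e : (∫ t in (0:ℝ)..1, ContinuousLinearMap.toSpanSingleton ℝ (t ^ 2 * φ (t ^ 2 * s))) 1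
       = ∫ t in (0:ℝ)..1, t ^ 2 * φ (t ^ 2 * s) := by
      rw [ContinuousLinearMap.intervalIntegral_apply]
      · simp
      · apply Continuous.intervalIntegrable
        have : Continuous (ContinuousLinearMap.toSpanSingletonCLE (𝕜 := ℝ) (E := ℝ)) := ContinuousLinearEquiv.continuous _
        exact this.comp (by fun_prop : Continuous fun t => (t ^ 2 * φ (t ^ 2 * s)))
    rw [e] at h2
    exact h2.const_mul 2⁻¹
  · simp only [Function.uncurry_def]; fun_prop
  · simp only [Function.uncurry_def]
    have : Continuous (ContinuousLinearMap.toSpanSingletonCLE (𝕜 := ℝ) (E := ℝ)) := ContinuousLinearEquiv.continuous _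
    exact this.comp (by fun_prop : Continuous fun p : ℝ × ℝ => (p.2 ^ 2 * φ (p.2 ^ 2 * p.1)))
  · intro s t
    have h1 : HasDerivAt (fun s : ℝ => t ^ 2 * s) (t ^ 2) s := by
      simpa using (hasDerivAt_id s).const_mul (t ^ 2)
    have h3 := (Prim_hasDerivAt h (t ^ 2 * s)).comp s h1
    rw [mul_comm] at h3
    exact h3.hasFDerivAt

theorem AA_cont {φ : ℝ → ℝ} (h : Continuous φ) : Continuous (AA φ) :=
  continuous_iff_continuousAt.2 fun y => (AA_hasDerivAt h y).continuousAt

/-- radial coefficient of the gradient -/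
noncomputable def GG (f : EuclideanSpace ℝ (Fin 3) → ℝ) (x : EuclideanSpace ℝ (Fin 3)) : ℝ :=
  ∫ t in (0:ℝ)..1, t ^ 2 • f (t • x)

theorem rad_hasFDerivAt {φ : ℝ → ℝ} (h : Continuous φ) (a b : ℝ) (x : EuclideanSpace ℝ (Fin 3)) :
    HasFDerivAt (fun x : EuclideanSpace ℝ (Fin 3) => a + b * AA φ (‖x‖ ^ 2))
      ((b * GG (fun x => φ (‖x‖ ^ 2)) x) • innerSL ℝ x) x := by
  have h1 : HasFDerivAt (fun x : EuclideanSpace ℝ (Fin 3) => ‖x‖ ^ 2) (2 • innerSL ℝ x) x :=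
    (hasStrictFDerivAt_norm_sq x).hasFDerivAt
  have h2 := (((AA_hasDerivAt h (‖x‖ ^ 2)).comp_hasFDerivAt x h1).const_mul b).const_add a
  have e : GG (fun x => φ (‖x‖ ^ 2)) x = ∫ t in (0:ℝ)..1, t ^ 2 * φ (t ^ 2 * ‖x‖ ^ 2) := by
    simp [GG, norm_smul, mul_pow]
  rw [e]
  have e2 : (b * ∫ t in (0:ℝ)..1, t ^ 2 * φ (t ^ 2 * ‖x‖ ^ 2)) • innerSL ℝ x =
      b • (2⁻¹ * ∫ t in (0:ℝ)..1, t ^ 2 * φ (t ^ 2 * ‖x‖ ^ 2)) • 2 • innerSL ℝ x := by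
    rw [← Nat.cast_smul_eq_nsmul ℝ, smul_smul, smul_smul]
    congr 1
    push_cast
    ring
  rw [e2]
  exact h2

theorem rad_contDiff {φ : ℝ → ℝ} (h : Continuous φ) (a b : ℝ) (n : ℕ)
    (hf : ContDiff ℝ n (fun x : EuclideanSpace ℝ (Fin 3) => φ (‖x‖ ^ 2))) :
    ContDiff ℝ (n + 1 : ℕ) (fun x : EuclideanSpace ℝ (Fin 3) => a + b * AA φ (‖x‖ ^ 2)) := by
  push_cast
  rw [contDiff_succ_iff_hasFDerivAt]
  refine ⟨_, ?_, rad_hasFDerivAt h a b⟩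
  have : ContDiff ℝ n (GG (fun x => φ (‖x‖ ^ 2))) := param_contDiff n 2 _ hf
  have h2 : ContDiff ℝ n (fun x : EuclideanSpace ℝ (Fin 3) => innerSL ℝ x) := (innerSL ℝ).contDiff
  exact (contDiff_const.mul this).smul h2

theorem lap_aux (w G : EuclideanSpace ℝ (Fin 3) → ℝ)
    (hw : ∀ x, HasFDerivAt w (G x • innerSL ℝ x) x) (hG : Differentiable ℝ G)
    (x : EuclideanSpace ℝ (Fin 3)) :
    laplacian w x = fderiv ℝ G x x + 3 * G x := by
  have hd : fderiv ℝ w = fun x => G x • innerSL ℝ x := funext fun x => (hw x).fderiv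
  let B : EuclideanSpace ℝ (Fin 3) →L[ℝ] EuclideanSpace ℝ (Fin 3) →L[ℝ] ℝ := innerSL ℝ
  have hB : ∀ y z, B y z = inner ℝ y z := fun y z => rfl
  have h2 : HasFDerivAt (fun x => G x • innerSL (E := EuclideanSpace ℝ (Fin 3)) ℝ x)
     (G x • B + (fderiv ℝ G x).smulRight (B x)) x := by
    exact (hG x).hasFDerivAt.smul B.hasFDerivAt
  have hx : x = ∑ i : Fin 3, x i • EuclideanSpace.single i (1:ℝ) := by
    ext j; simp [Finset.sum_apply, Pi.single_apply]
  unfold laplacian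
  simp only [iteratedFDeriv_two_apply, hd, h2.fderiv]
  conv_rhs => rw [show fderiv ℝ G x x = fderiv ℝ G x (∑ i : Fin 3, x i • EuclideanSpace.single i (1:ℝ)) by rw [← hx]]
  simp only [map_sum, map_smul, Fin.sum_univ_three]
  simp [hB, EuclideanSpace.inner_single_left, EuclideanSpace.inner_single_right]
  ring

theorem GG_euler (f : EuclideanSpace ℝ (Fin 3) → ℝ) (hf : Continuous f)
    (hG : Differentiable ℝ (GG f)) (x : EuclideanSpace ℝ (Fin 3)) :
    fderiv ℝ (GG f) x x + 3 * GG f x = f x := by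
  have e : (fun l : ℝ => l ^ 3 * GG f (l • x)) = Prim (fun τ => τ ^ 2 * f (τ • x)) := by
    funext l
    have := intervalIntegral.mul_integral_comp_mul_left (a := 0) (b := 1)
      (f := fun τ => τ ^ 2 * f (τ • x)) (c := l)
    simp only [mul_zero, mul_one] at this
    rw [Prim, ← this, GG, ← intervalIntegral.integral_const_mul, ← intervalIntegral.integral_const_mul]
    congr 1
    funext t
    simp only [smul_eq_mul, smul_smul, mul_comm t l]
    ring
  have h1 : HasDerivAt (Prim (fun τ => τ ^ 2 * f (τ • x))) (1 ^ 2 * f ((1:ℝ) • x)) 1 :=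
    Prim_hasDerivAt (by fun_prop) 1
  have h2 : HasDerivAt (fun l : ℝ => l • x) x 1 := by
    simpa using (hasDerivAt_id (1:ℝ)).smul_const x
  have h3 : HasDerivAt (fun l : ℝ => GG f (l • x)) (fderiv ℝ (GG f) ((1:ℝ) • x) x) 1 :=
    HasFDerivAt.comp_hasDerivAt (1:ℝ) (l := GG f) (hG ((1:ℝ) • x)).hasFDerivAt h2
  have h4 := (hasDerivAt_pow 3 (1:ℝ)).mul h3
  have h5 := h4.unique (by rw [← e] at h1; exact h1)
  simp at h5
  linarith

theorem rad_lap {φ : ℝ → ℝ} (h : Continuous φ) (a b : ℝ)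
    (hf : ContDiff ℝ 1 (fun x : EuclideanSpace ℝ (Fin 3) => φ (‖x‖ ^ 2)))
    (x : EuclideanSpace ℝ (Fin 3)) :
    laplacian (fun x : EuclideanSpace ℝ (Fin 3) => a + b * AA φ (‖x‖ ^ 2)) x = b * φ (‖x‖ ^ 2) := by
  have hG : ContDiff ℝ 1 (GG (fun x => φ (‖x‖ ^ 2))) := by
    have := param_contDiff 1 2 (fun x : EuclideanSpace ℝ (Fin 3) => φ (‖x‖ ^ 2)) (by exact_mod_cast hf)
    exact_mod_cast this
  have hG' := hG.differentiable one_ne_zero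
  rw [lap_aux _ _ (rad_hasFDerivAt h a b) (hG'.const_mul b)]
  rw [fderiv_const_mul (hG' x)]
  have := GG_euler _ hf.continuous hG' x
  simp only [_root_.smul_apply, smul_eq_mul]
  linear_combination b * this

theorem Prim_mono {φ ψ : ℝ → ℝ} (hφ : Continuous φ) (hψ : Continuous ψ)
    (h : ∀ s, 0 ≤ s → φ s ≤ ψ s) {y : ℝ} (hy : 0 ≤ y) : Prim φ y ≤ Prim ψ y :=
  intervalIntegral.integral_mono_on hy (hφ.intervalIntegrable _ _) (hψ.intervalIntegrable _ _)
    fun s hs => h s hs.1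

theorem AA_int {φ : ℝ → ℝ} (hφ : Continuous φ) (s : ℝ) :
    IntervalIntegrable (fun t => Prim φ (t ^ 2 * s)) volume 0 1 := by
  have := Prim_cont hφ
  exact Continuous.intervalIntegrable (by fun_prop) _ _

theorem AA_mono {φ ψ : ℝ → ℝ} (hφ : Continuous φ) (hψ : Continuous ψ)
    (h : ∀ s, 0 ≤ s → φ s ≤ ψ s) {y : ℝ} (hy : 0 ≤ y) : AA φ y ≤ AA ψ y := by
  unfold AA
  have := intervalIntegral.integral_mono_on zero_le_one (AA_int hφ y) (AA_int hψ y)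
    fun t ht => Prim_mono hφ hψ h (mul_nonneg (sq_nonneg t) hy)
  linarith

theorem AA_const (k s : ℝ) : AA (fun _ => k) s = k * s / 6 := by
  unfold AA Prim
  simp only [intervalIntegral.integral_const, smul_eq_mul, sub_zero, mul_assoc]
  rw [intervalIntegral.integral_mul_const, integral_pow]
  norm_num
  ring

theorem AA_add {φ ψ : ℝ → ℝ} (hφ : Continuous φ) (hψ : Continuous ψ) (s : ℝ) :
    AA (fun s => φ s + ψ s) s = AA φ s + AA ψ s := by
  have e : ∀ y, Prim (fun s => φ s + ψ s) y = Prim φ y + Prim ψ y := fun y =>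
    intervalIntegral.integral_add (hφ.intervalIntegrable _ _) (hψ.intervalIntegrable _ _)
  unfold AA
  simp only [e]
  rw [intervalIntegral.integral_add (AA_int hφ s) (AA_int hψ s)]
  ring

theorem AA_abs {φ ψ χ : ℝ → ℝ} (hφ : Continuous φ) (hψ : Continuous ψ) (hχ : Continuous χ)
    (h : ∀ s, 0 ≤ s → |φ s - ψ s| ≤ χ s) {y : ℝ} (hy : 0 ≤ y) : |AA φ y - AA ψ y| ≤ AA χ y := by
  have h1 : AA φ y ≤ AA (fun s => ψ s + χ s) y := AA_mono hφ (hψ.add hχ)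
    (fun s hs => by have := abs_le.1 (h s hs); simp only [Pi.add_apply]; linarith [this.2]) hy
  have h2 : AA ψ y ≤ AA (fun s => φ s + χ s) y := AA_mono hψ (hφ.add hχ)
    (fun s hs => by have := abs_le.1 (h s hs); simp only [Pi.add_apply]; linarith [this.1]) hy
  rw [AA_add hψ hχ] at h1
  rw [AA_add hφ hχ] at h2
  rw [abs_le]; constructor <;> linarith

theorem decay_cont (M c q : ℝ) (hc : 0 < c) : Continuous (fun s : ℝ => M * (1 + c * |s|) ^ (-q)) := by
  refine continuous_const.mul (Continuous.rpow_const (by fun_prop) fun s => Or.inl ?_)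
  positivity

theorem AA_decay (M c q : ℝ) (hM : 0 ≤ M) (hc : 0 < c) (hq : 1 < q) {y : ℝ} (hy : 0 ≤ y) :
    AA (fun s : ℝ => M * (1 + c * |s|) ^ (-q)) y ≤ M / (2 * (c * (q - 1))) := by
  have hq1 : 0 < q - 1 := by linarith
  have hcq : 0 < c * (q - 1) := mul_pos hc hq1
  have hP : ∀ z, 0 ≤ z → Prim (fun s : ℝ => M * (1 + c * |s|) ^ (-q)) z ≤ M / (c * (q - 1)) := by
    intro z hz
    have e : Prim (fun s : ℝ => M * (1 + c * |s|) ^ (-q)) z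
        = -(M / (c * (q - 1))) * (1 + c * z) ^ (1 - q) - -(M / (c * (q - 1))) * (1 + c * 0) ^ (1 - q) := by
      unfold Prim
      refine intervalIntegral.integral_eq_sub_of_hasDerivAt (f := fun z => -(M / (c * (q - 1))) * (1 + c * z) ^ (1 - q)) ?_ ((decay_cont M c q hc).intervalIntegrable _ _)
      intro x hx
      rw [Set.uIcc_of_le hz] at hx
      have hx0 : 0 ≤ x := hx.1
      have hp : 0 < 1 + c * x := by positivity
      have h1 : HasDerivAt (fun z : ℝ => 1 + c * z) c x := by
        simpa using ((hasDerivAt_id x).const_mul c).const_add 1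
      have h2 := (h1.rpow_const (p := 1 - q) (Or.inl hp.ne')).const_mul (-(M / (c * (q - 1))))
      refine h2.congr_deriv ?_
      rw [abs_of_nonneg hx0, show 1 - q - 1 = -q by ring]
      field_simp
      try ring
    rw [e]
    have : 0 ≤ M / (c * (q - 1)) * (1 + c * z) ^ (1 - q) := by positivity
    simp
    linarith
  unfold AA
  have := intervalIntegral.integral_mono_on zero_le_one (AA_int (decay_cont M c q hc) y)
    (intervalIntegrable_const (c := M / (c * (q - 1)))) 
    fun t ht => hP _ (mul_nonneg (sq_nonneg t) hy)
  simp only [intervalIntegral.integral_const, smul_eq_mul, sub_zero, one_mul] at this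
  calc _ ≤ 2⁻¹ * (M / (c * (q - 1))) := by linarith
    _ = _ := by field_simp

theorem rpow_lip (q : ℝ) (hq : 1 < q) {m x y : ℝ} (hm : 0 < m) (hx : m ≤ x) (hy : m ≤ y) :
    |x ^ (-q) - y ^ (-q)| ≤ q * m ^ (-q - 1) * |x - y| := by
  have := Convex.norm_image_sub_le_of_norm_hasDerivWithin_le (f := fun x : ℝ => x ^ (-q))
    (f' := fun x => -q * x ^ (-q - 1)) (s := Set.Ici m) (x := y) (y := x) (C := q * m ^ (-q - 1))
    (fun z hz => (Real.hasDerivAt_rpow_const (Or.inl (hm.trans_le hz).ne')).hasDerivWithinAt)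
    (fun z hz => ?_) (convex_Ici m) hy hx
  · simpa using this
  · have hz' : 0 < z := hm.trans_le hz
    rw [norm_mul, Real.norm_eq_abs, Real.norm_eq_abs, abs_neg, abs_of_pos (by linarith : 0 < q),
      abs_of_pos (by positivity)]
    exact mul_le_mul_of_nonneg_left
      (Real.rpow_le_rpow_of_nonpos hm hz (by linarith : -q - 1 ≤ 0)) (by linarith)

/-- truncated nonlinearity -/
noncomputable def FF (q c : ℝ) (v : ℝ → ℝ) (s : ℝ) : ℝ :=
  (1 + AA (fun s => max (v s) (6 * c)) |s|) ^ (-q)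

theorem UU_ge {c : ℝ} {v : ℝ → ℝ} (hv : Continuous v) (s : ℝ) :
    1 + c * |s| ≤ 1 + AA (fun s => max (v s) (6 * c)) |s| := by
  have := AA_mono (φ := fun _ => 6 * c) (ψ := fun s => max (v s) (6 * c)) continuous_const
    (by fun_prop) (fun s _ => le_max_right _ _) (abs_nonneg s)
  rw [AA_const] at this
  linarith

theorem FF_cont {q c : ℝ} (hc : 0 < c) {v : ℝ → ℝ} (hv : Continuous v) : Continuous (FF q c v) := by
  have h1 : Continuous (AA (fun s => max (v s) (6 * c))) := AA_cont (by fun_prop)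
  refine Continuous.rpow_const (by fun_prop) fun s => Or.inl ?_
  have h2 := UU_ge (c := c) hv s
  have : 0 < 1 + c * |s| := by positivity
  linarith

theorem FF_bd {q c : ℝ} (hq : 1 < q) (hc : 0 < c) {v : ℝ → ℝ} (hv : Continuous v) (s : ℝ) :
    0 ≤ FF q c v s ∧ FF q c v s ≤ 1 * (1 + c * |s|) ^ (-q) := by
  have h2 := UU_ge (c := c) hv s
  have : 0 < 1 + c * |s| := by positivity
  constructor
  · exact Real.rpow_nonneg (by linarith) _
  · rw [one_mul]
    exact Real.rpow_le_rpow_of_nonpos this h2 (by linarith)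

theorem AF_bd {q c : ℝ} (hq : 1 < q) (hc : 0 < c) {v : ℝ → ℝ} (hv : Continuous v) {s : ℝ}
    (hs : 0 ≤ s) : 0 ≤ AA (FF q c v) s ∧ AA (FF q c v) s ≤ 1 / (2 * (c * (q - 1))) := by
  constructor
  · have := AA_mono (φ := fun _ => 0) continuous_const (FF_cont (q := q) hc hv)
      (fun s _ => (FF_bd hq hc hv s).1) hs
    simpa [AA_const] using this
  · exact (AA_mono (FF_cont (q := q) hc hv) (decay_cont 1 c q hc)
      (fun s _ => (FF_bd hq hc hv s).2) hs).trans (AA_decay 1 c q zero_le_one hc hq hs)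

theorem FF_lip {q c : ℝ} (hq : 1 < q) (hc : 0 < c) {v w : ℝ → ℝ} (hv : Continuous v)
    (hw : Continuous w) {d : ℝ} (hd : ∀ s, |v s - w s| ≤ d) (s : ℝ) :
    |FF q c v s - FF q c w s| ≤ (d * q / (6 * c)) * (1 + c * |s|) ^ (-q) := by
  have hm : 0 < 1 + c * |s| := by positivity
  have h1 := rpow_lip q hq hm (UU_ge (c := c) hv s) (UU_ge (c := c) hw s)
  have h2 := AA_abs (φ := fun s => max (v s) (6 * c)) (ψ := fun s => max (w s) (6 * c))
    (χ := fun _ => d) (by fun_prop) (by fun_prop) continuous_const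
    (fun s _ => (abs_max_sub_max_le_abs _ _ _).trans (hd s)) (abs_nonneg s)
  rw [AA_const] at h2
  have hd0 : 0 ≤ d := (abs_nonneg _).trans (hd 0)
  refine h1.trans ?_
  rw [add_sub_add_left_eq_sub, Real.rpow_sub_one hm.ne']
  set P := (1 + c * |s|) ^ (-q) with hP
  have hP0 : 0 ≤ P := by positivity
  calc _ ≤ q * (P / (1 + c * |s|)) * (d * |s| / 6) := by gcongr
    _ = (d * q / (6 * c)) * P * ((c * |s|) / (1 + c * |s|)) := by field_simp
    _ ≤ (d * q / (6 * c)) * P * 1 := by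
        gcongr
        rw [div_le_one hm]; linarith
    _ = _ := by ring

open BoundedContinuousFunction in
theorem exists_fix (q : ℝ) (hq : 1 < q) : ∃ (c : ℝ) (v : ℝ → ℝ), 0 < c ∧ Continuous v ∧
    (∀ s, 6 * c ≤ v s) ∧ (∀ s, v s = 6 * c + 1 - AA (FF q c v) |s|) := by
  have hq1 : 0 < q - 1 := by linarith
  have hq0 : 0 < q := by linarith
  obtain ⟨c, hcdef⟩ : ∃ c, c = q / (q - 1) := ⟨_, rfl⟩
  have hc : 0 < c := by rw [hcdef]; positivity
  have hc1 : 1 ≤ c := by rw [hcdef, le_div_iff₀ hq1]; linarith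
  have hcq : c * (q - 1) = q := by rw [hcdef]; field_simp
  have hbd : 1 / (2 * (c * (q - 1))) ≤ 1 := by
    rw [hcq, div_le_one (by positivity)]; linarith
  let T : (ℝ →ᵇ ℝ) → (ℝ →ᵇ ℝ) := fun v =>
    BoundedContinuousFunction.ofNormedAddCommGroup (fun s => 6 * c + 1 - AA (FF q c v) |s|)
      (by
        have := AA_cont (FF_cont (q := q) hc v.continuous)
        fun_prop) (6 * c + 1) (by
        intro s
        have := AF_bd hq hc v.continuous (abs_nonneg s)
        rw [Real.norm_eq_abs, abs_le]
        constructor <;> linarith [this.1, this.2])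
  have hT : ∀ v s, T v s = 6 * c + 1 - AA (FF q c v) |s| := fun v s => rfl
  have hK : ContractingWith (1/2) T := by
    refine ⟨by rw [← NNReal.coe_lt_coe]; norm_num, LipschitzWith.of_dist_le_mul fun v w => ?_⟩
    rw [BoundedContinuousFunction.dist_le (by positivity)]
    intro s
    have hd : ∀ s, |v s - w s| ≤ dist v w := fun s => by
      rw [← Real.dist_eq]; exact BoundedContinuousFunction.dist_coe_le_dist s
    have h1 := AA_abs (FF_cont (q := q) hc v.continuous) (FF_cont (q := q) hc w.continuous)
      (decay_cont _ c q hc)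
      (fun s _ => FF_lip hq hc v.continuous w.continuous hd s) (abs_nonneg s)
    have h2 := AA_decay (dist v w * q / (6 * c)) c q (by positivity) hc hq (abs_nonneg s)
    rw [hcq] at h2
    have h3 : dist v w * q / (6 * c) / (2 * q) ≤ 1 / 2 * dist v w := by
      rw [show dist v w * q / (6 * c) / (2 * q) = dist v w / (12 * c) by field_simp; ring]
      rw [div_le_iff₀ (by positivity)]
      nlinarith [dist_nonneg (x := v) (y := w)]
    rw [hT, hT, Real.dist_eq, sub_sub_sub_cancel_left, abs_sub_comm]
    have h4 := h1.trans (h2.trans h3)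
    simpa using h4
  have hfix := hK.fixedPoint_isFixedPt
  set v := ContractingWith.fixedPoint T hK
  have hv : ∀ s, v s = 6 * c + 1 - AA (FF q c v) |s| := fun s => by
    conv_lhs => rw [← hfix.eq]
    exact hT v s
  refine ⟨c, v, hc, v.continuous, fun s => ?_, hv⟩
  have := AF_bd hq hc v.continuous (abs_nonneg s)
  rw [hv]
  linarith [this.2]

/-- the average -/
noncomputable def HH (v : ℝ → ℝ) (s : ℝ) : ℝ :=
  2⁻¹ * ∫ t in (0:ℝ)..1, ∫ τ in (0:ℝ)..(t ^ 2), v (s * τ)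

theorem AA_eq_HH (v : ℝ → ℝ) (s : ℝ) : AA v s = s * HH v s := by
  unfold AA HH Prim
  rw [mul_left_comm, ← intervalIntegral.integral_const_mul s]
  congr 2
  funext t
  have := intervalIntegral.mul_integral_comp_mul_left (a := 0) (b := t ^ 2) (f := v) (c := s)
  rw [this, mul_zero, mul_comm s]

theorem HH_anti {v : ℝ → ℝ} (hv : Continuous v)
    (hanti : ∀ a b, 0 ≤ a → a ≤ b → v b ≤ v a) {a b : ℝ} (ha : 0 ≤ a) (hab : a ≤ b) :
    HH v b ≤ HH v a := by
  have hc : ∀ s, Continuous (fun t : ℝ => ∫ τ in (0:ℝ)..(t ^ 2), v (s * τ)) := fun s => by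
    have := Prim_cont (φ := fun τ => v (s * τ)) (by fun_prop)
    exact this.comp (by fun_prop : Continuous fun t : ℝ => t ^ 2)
  unfold HH
  have := intervalIntegral.integral_mono_on (μ := volume) zero_le_one ((hc b).intervalIntegrable 0 1)
    ((hc a).intervalIntegrable 0 1) (fun t ht =>
      Prim_mono (φ := fun τ => v (b * τ)) (ψ := fun τ => v (a * τ)) (by fun_prop) (by fun_prop)
        (fun s hs => hanti _ _ (mul_nonneg ha hs) (mul_le_mul_of_nonneg_right hab hs)) (sq_nonneg t))
  linarith

theorem HH_lim {v : ℝ → ℝ} (hv : Continuous v) {c : ℝ} (hc : 0 < c) (hvc : ∀ s, 6 * c ≤ v s)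
    (hanti : ∀ a b, 0 ≤ a → a ≤ b → v b ≤ v a) :
    ∃ L, 0 < L ∧ Tendsto (HH v) atTop (𝓝 L) := by
  have h1 : Antitone (fun s => HH v (max s 1)) := fun a b hab =>
    HH_anti hv hanti (zero_le_one.trans (le_max_right a 1)) (max_le_max_right 1 hab)
  have h2 : ∀ s, c ≤ HH v (max s 1) := fun s => by
    have hs : 0 < max s 1 := lt_max_of_lt_right one_pos
    have := AA_mono (φ := fun _ => 6 * c) continuous_const hv (fun s _ => hvc s) hs.le
    rw [AA_const, AA_eq_HH] at this
    have h3 : max s 1 * c ≤ max s 1 * HH v (max s 1) := by linarith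
    exact le_of_mul_le_mul_left h3 hs
  refine ⟨_, ?_, (tendsto_atTop_ciInf h1 ⟨c, by rintro _ ⟨s, rfl⟩; exact h2 s⟩).congr' ?_⟩
  · exact hc.trans_le (le_ciInf h2)
  · filter_upwards [eventually_ge_atTop 1] with s hs
    rw [max_eq_left hs]

theorem exists_radial_solution_quadratic_growth
    (q : ℝ) (hq : 1 < q) :
    ∃ u : EuclideanSpace ℝ (Fin 3) → ℝ,
      ContDiff ℝ 4 u ∧ (∀ x, 0 < u x) ∧
      (∀ x, laplacian (laplacian u) x + (u x) ^ (-q) = 0) ∧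
      (∀ x y, ‖x‖ = ‖y‖ → u x = u y) ∧
      ∃ L : ℝ, 0 < L ∧
        Tendsto (fun x => u x / ‖x‖ ^ 2) (cocompact (EuclideanSpace ℝ (Fin 3))) (𝓝 L) := by
  obtain ⟨c, v, hc, hv, hvc, hfix⟩ := exists_fix q hq
  have hφ : Continuous (FF q c v) := FF_cont hc hv
  have hmax : (fun s => max (v s) (6 * c)) = v := funext fun s => max_eq_left (hvc s)
  have hu0 : ∀ x : EuclideanSpace ℝ (Fin 3), 0 < 1 + 1 * AA v (‖x‖ ^ 2) := fun x => by
    have := UU_ge (c := c) hv (‖x‖ ^ 2)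
    rw [hmax, abs_of_nonneg (sq_nonneg _)] at this
    have : 0 ≤ c * ‖x‖ ^ 2 := by positivity
    linarith
  have hvx : (fun x : EuclideanSpace ℝ (Fin 3) => v (‖x‖ ^ 2))
      = fun x => (6 * c + 1) + (-1) * AA (FF q c v) (‖x‖ ^ 2) := by
    funext x
    rw [hfix, abs_of_nonneg (sq_nonneg _)]
    ring
  have hφx : (fun x : EuclideanSpace ℝ (Fin 3) => FF q c v (‖x‖ ^ 2))
      = fun x => (1 + 1 * AA v (‖x‖ ^ 2)) ^ (-q) := by
    funext x
    rw [FF, hmax, abs_of_nonneg (sq_nonneg _), one_mul]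
  have step : ∀ n : ℕ, ContDiff ℝ n (fun x : EuclideanSpace ℝ (Fin 3) => FF q c v (‖x‖ ^ 2)) →
      ContDiff ℝ (n + 1 + 1 : ℕ) (fun x : EuclideanSpace ℝ (Fin 3) => 1 + 1 * AA v (‖x‖ ^ 2)) := by
    intro n hn
    refine rad_contDiff hv 1 1 (n + 1) ?_
    rw [hvx]
    exact rad_contDiff hφ _ _ n hn
  have r2 := step 0 (by
    rw [Nat.cast_zero, contDiff_zero]; fun_prop)
  have p2 : ContDiff ℝ (2 : ℕ) (fun x : EuclideanSpace ℝ (Fin 3) => FF q c v (‖x‖ ^ 2)) := by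
    rw [hφx]
    exact r2.rpow_const_of_ne fun x => (hu0 x).ne'
  have r4 := step 2 p2
  have r1v : ContDiff ℝ (2 + 1 : ℕ) (fun x : EuclideanSpace ℝ (Fin 3) => v (‖x‖ ^ 2)) := by
    rw [hvx]
    exact rad_contDiff hφ _ _ 2 p2
  have lap1 : laplacian (fun x => 1 + 1 * AA v (‖x‖ ^ 2)) = fun x => v (‖x‖ ^ 2) := by
    funext x
    rw [rad_lap hv 1 1 (r1v.of_le (by norm_cast)) x, one_mul]
  have vanti : ∀ a b, 0 ≤ a → a ≤ b → v b ≤ v a := by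
    intro a b ha hab
    have hb := ha.trans hab
    rw [hfix, hfix a, abs_of_nonneg ha, abs_of_nonneg hb]
    suffices AA (FF q c v) a ≤ AA (FF q c v) b by linarith
    unfold AA
    have := intervalIntegral.integral_mono_on zero_le_one (AA_int hφ a) (AA_int hφ b)
      fun t ht => by
        have h1 : t ^ 2 * a ≤ t ^ 2 * b := mul_le_mul_of_nonneg_left hab (sq_nonneg t)
        have h2 := intervalIntegral.integral_interval_sub_left (μ := volume)
          (hφ.intervalIntegrable 0 (t ^ 2 * b)) (hφ.intervalIntegrable 0 (t ^ 2 * a))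
        have h3 := intervalIntegral.integral_nonneg (μ := volume) h1 fun s _ => (FF_bd hq hc hv s).1
        show Prim _ _ ≤ Prim _ _
        unfold Prim
        linarith
    linarith
  obtain ⟨L, hL, hlim⟩ := HH_lim hv hc hvc vanti
  refine ⟨fun x => 1 + 1 * AA v (‖x‖ ^ 2), by exact_mod_cast r4, hu0, fun x => ?_,
    fun x y hxy => by simp only [hxy], L, hL, ?_⟩
  · rw [lap1, hvx, rad_lap hφ _ _ (p2.of_le (by norm_cast))]
    have := congrFun hφx x
    rw [this]
    ring
  · have hn : Tendsto (fun x : EuclideanSpace ℝ (Fin 3) => ‖x‖ ^ 2) (cocompact _) atTop :=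
      (tendsto_pow_atTop two_ne_zero).comp tendsto_norm_cocompact_atTop
    have h1 := (tendsto_inv_atTop_zero.comp hn).add (hlim.comp hn)
    rw [zero_add] at h1
    refine h1.congr' ?_
    filter_upwards [hn.eventually_gt_atTop 0] with x hx
    simp only [Function.comp]
    rw [AA_eq_HH]
    rw [one_mul, add_div, mul_div_cancel_left₀ _ hx.ne', one_div]
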